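/- Let Δ be a complete fan in ℝ^n. For σ ∈ Δ define e_σ^∨ ⊂ B as the union of the sets d_{(τ₀,…,τ_k)} over all flags τ₀ ⊊ ⋯ ⊊ τ_k in Δ such that σ is a face of τ₀. Then e_σ^∨ is homeomorphic to a closed Euclidean ball of dimension n − dim σ, and the union of the sets e_σ^∨ over all σ ∈ Δ equals the closed unit ball B. -/

import Mathlib

open scoped RealInnerProductSpace

noncomputable section

abbrev Euc (n : ℕ) := EuclideanSpace ℝ (Fin n)

/-- A vector of `ℝ^n` has integral coordinates. -/
def IsIntegralVec {n : ℕ} (x : Euc n) : Prop := ∀ i, ∃ m : ℤ, x i = (m : ℝ)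

/-- A rational polyhedral cone in `ℝ^n`. -/
def IsRatPolyCone {n : ℕ} (σ : Set (Euc n)) : Prop :=
  ∃ (k : ℕ) (v : Fin k → Euc n), (∀ i, IsIntegralVec (v i)) ∧
    σ = {x | ∃ lam : Fin k → ℝ, (∀ i, 0 ≤ lam i) ∧ x = ∑ i, lam i • v i}

/-- Strict convexity of a cone: `σ ∩ (−σ) = {0}`. -/
def IsStrictlyConvexCone {n : ℕ} (σ : Set (Euc n)) : Prop := σ ∩ (-σ) = {0}

/-- The dual cone. -/
def dualCone {n : ℕ} (σ : Set (Euc n)) : Set (Euc n) := {u | ∀ x ∈ σ, 0 ≤ ⟪u, x⟫}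

/-- The orthogonal of a cone. -/
def orthCone {n : ℕ} (σ : Set (Euc n)) : Set (Euc n) := {u | ∀ x ∈ σ, ⟪u, x⟫ = 0}

/-- `τ` is a face of `σ`. -/
def IsFaceOf {n : ℕ} (τ σ : Set (Euc n)) : Prop :=
  ∃ u ∈ dualCone σ, τ = σ ∩ {x | ⟪u, x⟫ = 0}

/-- The dimension of a cone: the dimension of its linear span. -/
def coneDim {n : ℕ} (σ : Set (Euc n)) : ℕ := Module.finrank ℝ (Submodule.span ℝ σ)

/-- A fan in `ℝ^n`. -/
structure IsFan {n : ℕ} (Δ : Set (Set (Euc n))) : Prop where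
  finite : Δ.Finite
  poly : ∀ σ ∈ Δ, IsRatPolyCone σ
  strictconv : ∀ σ ∈ Δ, IsStrictlyConvexCone σ
  face_mem : ∀ σ ∈ Δ, ∀ τ, IsFaceOf τ σ → τ ∈ Δ
  inter_face : ∀ σ ∈ Δ, ∀ τ ∈ Δ, IsFaceOf (σ ∩ τ) σ ∧ IsFaceOf (σ ∩ τ) τ

/-- A complete fan: the union of the cones is everything. -/
def IsCompleteFan {n : ℕ} (Δ : Set (Set (Euc n))) : Prop :=
  IsFan Δ ∧ ⋃₀ Δ = Set.univ

/-- A flag `τ₀ ⊊ τ₁ ⊊ ⋯ ⊊ τ_k` of cones in the fan `Δ`, where each `τ_i`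
is a proper face of `τ_{i+1}`. -/
def IsFlag {n : ℕ} (Δ : Set (Set (Euc n))) {k : ℕ} (τ : Fin (k + 1) → Set (Euc n)) : Prop :=
  (∀ i, τ i ∈ Δ) ∧
    ∀ i : Fin k, IsFaceOf (τ i.castSucc) (τ i.succ) ∧ τ i.castSucc ≠ τ i.succ

/-- `v_σ`: the sum of the unit vectors `u_ρ` over the one-dimensional cones
`ρ ∈ Δ` that are faces of `σ`; here `u : Set (Euc n) → Euc n` is a choice of
the unit vector of each one-dimensional cone. -/
def vVec {n : ℕ} (Δ : Set (Set (Euc n))) (u : Set (Euc n) → Euc n)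
    (σ : Set (Euc n)) : Euc n :=
  ∑ᶠ ρ ∈ {ρ | ρ ∈ Δ ∧ IsFaceOf ρ σ ∧ coneDim ρ = 1}, u ρ

/-- The choice function `u` assigns to every one-dimensional cone of `Δ` the
unique unit vector it contains. -/
def IsUnitVecChoice {n : ℕ} (Δ : Set (Set (Euc n))) (u : Set (Euc n) → Euc n) : Prop :=
  ∀ ρ ∈ Δ, coneDim ρ = 1 → u ρ ∈ ρ ∧ ‖u ρ‖ = 1

/-- The cone generated by finitely many vectors `w₀, …, w_{m−1}`. -/
def coneOf {n m : ℕ} (w : Fin m → Euc n) : Set (Euc n) :=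
  {x | ∃ μ : Fin m → ℝ, (∀ i, 0 ≤ μ i) ∧ x = ∑ i, μ i • w i}

open scoped Classical in
/-- The cell `d_{(τ₀,…,τ_k)}` of the ball associated to a flag in `Δ`. -/
def dSet {n : ℕ} (Δ : Set (Set (Euc n))) (u : Set (Euc n) → Euc n)
    {k : ℕ} (τ : Fin (k + 1) → Set (Euc n)) : Set (Euc n) :=
  if τ 0 = ({0} : Set (Euc n)) then
    (if k = 0 then {0}
     else coneOf (fun i : Fin k => vVec Δ u (τ i.succ)) ∩ Metric.closedBall (0 : Euc n) 1)
  else coneOf (fun i => vVec Δ u (τ i)) ∩ Metric.sphere (0 : Euc n) 1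

/-- The dual cell `e_σ^∨ ⊆ B`: the union of the cells `d_{(τ₀,…,τ_k)}` over
all flags of `Δ` whose smallest member `τ₀` has `σ` as a face. -/
def eDualCell {n : ℕ} (Δ : Set (Set (Euc n))) (u : Set (Euc n) → Euc n)
    (σ : Set (Euc n)) : Set (Euc n) :=
  ⋃ (k : ℕ) (τ : Fin (k + 1) → Set (Euc n))
    (_ : IsFlag Δ τ ∧ IsFaceOf σ (τ 0)), dSet Δ u τ

/-- A nonnegative function supported on a chain. -/
def ChainFn {I : Type*} [PartialOrder I] (b : I → ℝ) : Prop :=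
  (∀ i, 0 ≤ b i) ∧ ∀ i j, b i ≠ 0 → b j ≠ 0 → i ≤ j ∨ j ≤ i

lemma ChainFn.smul {I : Type*} [PartialOrder I] {b : I → ℝ} (h : ChainFn b) {c : ℝ}
    (hc : 0 ≤ c) : ChainFn (fun i => c * b i) :=
  ⟨fun i => mul_nonneg hc (h.1 i), fun i j hi hj =>
    h.2 i j (right_ne_zero_of_mul hi) (right_ne_zero_of_mul hj)⟩

lemma ChainFn.mono {I : Type*} [PartialOrder I] {b b' : I → ℝ} (h : ChainFn b)
    (h0 : ∀ i, 0 ≤ b' i) (hs : ∀ i, b' i ≠ 0 → b i ≠ 0) : ChainFn b' :=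
  ⟨h0, fun i j hi hj => h.2 i j (hs i hi) (hs j hj)⟩

lemma ChainFn.insert_le {I : Type*} [PartialOrder I] [DecidableEq I] {b : I → ℝ} (h : ChainFn b)
    {s : I} (hs : ∀ i, b i ≠ 0 → i ≤ s ∨ s ≤ i) {c : ℝ} (hc : 0 ≤ c) :
    ChainFn (Function.update b s c) := by
  refine ⟨fun i => ?_, fun i j hi hj => ?_⟩
  · by_cases hi : i = s
    · subst hi; simpa using hc
    · simpa [hi] using h.1 i
  · by_cases his : i = s
    · by_cases hjs : j = s
      · subst his; subst hjs; exact Or.inl le_rfl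
      · subst his
        rw [Function.update_of_ne hjs] at hj
        exact (hs j hj).symm
    · rw [Function.update_of_ne his] at hi
      by_cases hjs : j = s
      · subst hjs; exact hs i hi
      · rw [Function.update_of_ne hjs] at hj
        exact h.2 i j hi hj

lemma sum_update_smul {I E : Type*} [Fintype I] [DecidableEq I] [AddCommGroup E] [Module ℝ E]
    (v : I → E) (b : I → ℝ) (s : I) (c : ℝ) :
    ∑ i, Function.update b s c i • v i = ∑ i, b i • v i + (c - b s) • v s := by
  have : ∀ i, Function.update b s c i • v i
      = b i • v i + if i = s then (c - b s) • v s else 0 := by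
    intro i
    by_cases h : i = s
    · subst h; simp [sub_smul]
    · simp [h]
  rw [Finset.sum_congr rfl (fun i _ => this i), Finset.sum_add_distrib]
  simp

lemma homeo_of_bij {X Y : Type*} [TopologicalSpace X] [TopologicalSpace Y] [T2Space Y]
    {P : Set X} (hP : IsCompact P) {S : Set Y} (f : X → Y) (hf : ContinuousOn f P)
    (hb : Set.BijOn f P S) : Nonempty (P ≃ₜ S) := by
  have : CompactSpace P := isCompact_iff_compactSpace.mp hP
  have e : P ≃ S := Set.BijOn.equiv f hb
  have hc : Continuous (Set.BijOn.equiv f hb) := by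
    refine Continuous.subtype_mk (f := fun x : P => f x) ?_ _
    exact continuousOn_iff_continuous_domRestrict.mp hf
  exact ⟨hc.homeoOfEquivCompactToT2⟩

lemma topo_main {I : Type*} [Fintype I] [PartialOrder I] {E W : Type*}
    [NormedAddCommGroup E] [NormedSpace ℝ E] [NormedAddCommGroup W] [NormedSpace ℝ W]
    (v : I → E) (p : E →L[ℝ] W) (s : I) (hps : p (v s) = 0)
    (U0 : ∀ b b' : I → ℝ, ChainFn b → ChainFn b' → (∀ i, b i ≠ 0 → s ≤ i) →
      (∀ i, b' i ≠ 0 → s ≤ i) → ∑ i, b i • v i = ∑ i, b' i • v i → b = b')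
    (U1 : ∀ b b' : I → ℝ, ChainFn b → ChainFn b' → (∀ i, b i ≠ 0 → s < i) →
      (∀ i, b' i ≠ 0 → s < i) → p (∑ i, b i • v i) = p (∑ i, b' i • v i) → b = b')
    (Ex : ∀ w : W, ∃ b : I → ℝ, ChainFn b ∧ (∀ i, b i ≠ 0 → s < i) ∧
      p (∑ i, b i • v i) = w) :
    Nonempty ({x : E | ‖x‖ = 1 ∧ ∃ b : I → ℝ, ChainFn b ∧ (∀ i, b i ≠ 0 → s ≤ i) ∧
      x = ∑ i, b i • v i} ≃ₜ Metric.closedBall (0 : W) 1) := by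
  classical
  set T : (I → ℝ) → E := fun b => ∑ i, b i • v i with hT
  have Tc : Continuous T := by fun_prop
  have Tsm : ∀ (c : ℝ) b, T (fun i => c * b i) = c • T b := by
    intro c b; simp [hT, Finset.smul_sum, mul_smul]
  set P : Set (I → ℝ) := {b | ChainFn b ∧ (∀ i, b i ≠ 0 → s ≤ i) ∧ ∑ i, b i = 1} with hPdef
  -- compactness
  have hPc : IsCompact P := by
    have h1 : P = Set.Icc (0 : I → ℝ) 1 ∩ {b | (∀ i j, ¬ (i ≤ j ∨ j ≤ i) → b i * b j = 0) ∧
        (∀ i, ¬ s ≤ i → b i = 0) ∧ ∑ i, b i = 1} := by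
      ext b
      constructor
      · rintro ⟨⟨h0, h1⟩, h2, h3⟩
        refine ⟨⟨fun i => h0 i, fun i => ?_⟩, ?_, ?_, h3⟩
        · rw [Pi.one_apply, ← h3]
          exact Finset.single_le_sum (f := b) (fun j _ => h0 j) (Finset.mem_univ i)
        · intro i j hij
          by_contra hne
          exact hij (h1 i j (left_ne_zero_of_mul hne) (right_ne_zero_of_mul hne))
        · intro i hi
          by_contra hne
          exact hi (h2 i hne)
      · rintro ⟨⟨h0, -⟩, h1, h2, h3⟩
        refine ⟨⟨fun i => h0 i, fun i j hi hj => ?_⟩, fun i hi => ?_, h3⟩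
        · by_contra hne
          exact mul_ne_zero hi hj (h1 i j hne)
        · by_contra hne
          exact hi (h2 i hne)
    rw [h1]
    refine isCompact_Icc.inter_right ?_
    simp only [Set.ofPred_and, Set.ofPred_forall]
    refine IsClosed.inter ?_ (IsClosed.inter ?_ ?_)
    · refine isClosed_iInter fun i => isClosed_iInter fun j => isClosed_iInter fun _ =>
        isClosed_eq (by fun_prop) (by fun_prop)
    · exact isClosed_iInter fun i => isClosed_iInter fun _ =>
        isClosed_eq (by fun_prop) (by fun_prop)
    · exact isClosed_eq (by fun_prop) (by fun_prop)
  have c0 : ChainFn (0 : I → ℝ) := ⟨fun _ => le_rfl, fun i j h => absurd rfl h⟩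
  have T0 : T 0 = 0 := by simp [hT]
  -- dropping the coordinate `s`
  have drop : ∀ b, ChainFn b → (∀ i, b i ≠ 0 → s ≤ i) →
      ChainFn (Function.update b s 0) ∧ (∀ i, Function.update b s 0 i ≠ 0 → s < i) ∧
      p (T (Function.update b s 0)) = p (T b) := by
    intro b hb hs
    refine ⟨hb.insert_le (fun i hi => Or.inr (hs i hi)) le_rfl, fun i hi => ?_, ?_⟩
    · by_cases his : i = s
      · subst his; simp at hi
      · rw [Function.update_of_ne his] at hi
        exact lt_of_le_of_ne (hs i hi) (Ne.symm his)
    · simp only [hT]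
      rw [sum_update_smul, map_add, map_smul, hps]; simp
  have scale : ∀ b b', b ∈ P → b' ∈ P → ∀ c : ℝ, b = (fun i => c * b' i) → b = b' := by
    intro b b' hb hb' c h
    have : c = 1 := by
      have h1 := hb.2.2
      rw [h, ← Finset.mul_sum, hb'.2.2] at h1
      linarith
    rw [h, this]; simp
  have Tne : ∀ b, b ∈ P → T b ≠ 0 := by
    intro b hb h
    have := U0 b 0 hb.1 c0 hb.2.1 (fun i hi => absurd rfl hi) (by
      change T b = T 0; rw [h, T0])
    have h1 := hb.2.2
    rw [this] at h1; simp at h1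
  have hf : Nonempty (P ≃ₜ {x : E | ‖x‖ = 1 ∧ ∃ b : I → ℝ, ChainFn b ∧
      (∀ i, b i ≠ 0 → s ≤ i) ∧ x = ∑ i, b i • v i}) := by
    refine homeo_of_bij hPc (fun b => ‖T b‖⁻¹ • T b) ?_ ⟨?_, ?_, ?_⟩
    · refine ContinuousOn.smul (ContinuousOn.inv₀ (by fun_prop) ?_) (by fun_prop)
      intro b hb; exact norm_ne_zero_iff.mpr (Tne b hb)
    · intro b hb
      refine ⟨?_, fun i => ‖T b‖⁻¹ * b i, hb.1.smul (by positivity),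
        fun i hi => hb.2.1 i (right_ne_zero_of_mul hi), (Tsm _ _).symm⟩
      have := norm_ne_zero_iff.mpr (Tne b hb)
      simp only [norm_smul, norm_inv, norm_norm]
      field_simp
    · intro b hb b' hb' h
      have n1 := norm_ne_zero_iff.mpr (Tne b hb)
      have n2 := norm_ne_zero_iff.mpr (Tne b' hb')
      simp only at h
      have h2 : T b = T (fun i => (‖T b‖ * ‖T b'‖⁻¹) * b' i) := by
        rw [Tsm, mul_smul, ← h, smul_smul, mul_inv_cancel₀ n1, one_smul]
      exact scale b b' hb hb' _ (U0 _ _ hb.1 (hb'.1.smul (by positivity)) hb.2.1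
        (fun i hi => hb'.2.1 i (right_ne_zero_of_mul hi)) h2)
    · rintro x ⟨hx, b, hb, hs, rfl⟩
      have hx' : ‖T b‖ = 1 := hx
      have hpos : 0 ≤ ∑ i, b i := Finset.sum_nonneg fun i _ => hb.1 i
      have hne : ∑ i, b i ≠ 0 := by
        intro h
        rw [Finset.sum_eq_zero_iff_of_nonneg (fun i _ => hb.1 i)] at h
        have : b = 0 := funext fun i => h i (Finset.mem_univ i)
        rw [this, T0] at hx'; simp at hx'
      refine ⟨fun i => (∑ i, b i)⁻¹ * b i, ⟨hb.smul (by positivity),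
        fun i hi => hs i (right_ne_zero_of_mul hi), ?_⟩, ?_⟩
      · rw [← Finset.mul_sum, inv_mul_cancel₀ hne]
      · simp only [Tsm]
        rw [norm_smul, hx', norm_inv, Real.norm_of_nonneg hpos, smul_smul]
        have : ((∑ i, b i)⁻¹ * 1)⁻¹ * (∑ i, b i)⁻¹ = 1 := by field_simp
        rw [this, one_smul]
  have Dne : ∀ b, b ∈ P → 0 < b s + ‖p (T b)‖ := by
    intro b hb
    have h0 := hb.1.1 s
    by_contra hcon
    have hn := norm_nonneg (p (T b))
    have hbs : b s = 0 := by linarith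
    have hp : ‖p (T b)‖ = 0 := by linarith
    obtain ⟨h1, h2, h3⟩ := drop b hb.1 hb.2.1
    have h4 := U1 _ 0 h1 c0 h2 (fun i hi => absurd rfl hi) (by
      change p (T _) = p (T 0)
      rw [h3, T0, map_zero]; exact norm_eq_zero.mp hp)
    have h5 : b = 0 := by
      rw [← h4]; ext i
      by_cases h : i = s
      · subst h; simp [hbs]
      · simp [h]
    have h1 := hb.2.2
    rw [h5] at h1; simp at h1
  have hg : Nonempty (P ≃ₜ Metric.closedBall (0 : W) 1) := by
    refine homeo_of_bij hPc (fun b => (b s + ‖p (T b)‖)⁻¹ • p (T b)) ?_ ⟨?_, ?_, ?_⟩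
    · refine ContinuousOn.smul (ContinuousOn.inv₀ (by fun_prop) ?_) (by fun_prop)
      intro b hb; exact (Dne b hb).ne'
    · intro b hb
      have hd := Dne b hb
      have h0 := hb.1.1 s
      simp only [mem_closedBall_zero_iff, norm_smul, norm_inv, Real.norm_of_nonneg hd.le]
      rw [inv_mul_le_iff₀ hd]; linarith
    · intro b hb b' hb' h
      have d1 := Dne b hb
      have d2 := Dne b' hb'
      simp only at h
      set c := (b s + ‖p (T b)‖) * (b' s + ‖p (T b')‖)⁻¹ with hc
      have hcp : 0 < c := by positivity
      have h2 : p (T b) = c • p (T b') := by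
        rw [hc, mul_smul, ← h, smul_smul, mul_inv_cancel₀ d1.ne', one_smul]
      have hcs : b s = c * b' s := by
        have e1 : ‖p (T b)‖ = c * ‖p (T b')‖ := by
          rw [h2, norm_smul, Real.norm_of_nonneg hcp.le]
        have e2 : b s + ‖p (T b)‖ = c * (b' s + ‖p (T b')‖) := by
          rw [hc]; field_simp
        linarith
      obtain ⟨k1, k2, k3⟩ := drop b hb.1 hb.2.1
      obtain ⟨l1, l2, l3⟩ := drop b' hb'.1 hb'.2.1
      have h5 := U1 _ _ k1 (l1.smul hcp.le) k2 (fun i hi => l2 i (right_ne_zero_of_mul hi)) (by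
        change p (T _) = p (T _)
        rw [k3, Tsm, map_smul, l3, h2])
      refine scale b b' hb hb' c ?_
      ext i
      by_cases his : i = s
      · subst his; exact hcs
      · have := congrFun h5 i
        simpa [his] using this
    · intro y hy
      rw [mem_closedBall_zero_iff] at hy
      obtain ⟨b, hb, hs, hpb⟩ := Ex y
      have hbs : b s = 0 := by
        by_contra h; exact lt_irrefl _ (hs s h)
      set b1 := Function.update b s (1 - ‖y‖) with hb1
      have hb1c : ChainFn b1 := hb.insert_le (fun i hi => Or.inr (hs i hi).le) (by linarith)
      have hb1s : ∀ i, b1 i ≠ 0 → s ≤ i := by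
        intro i hi
        by_cases his : i = s
        · exact his.ge
        · rw [hb1, Function.update_of_ne his] at hi
          exact (hs i hi).le
      have hpb1 : p (T b1) = y := by
        simp only [hT, hb1]
        rw [sum_update_smul, map_add, map_smul, hps, hpb]; simp
      have hb1ss : b1 s = 1 - ‖y‖ := by simp [hb1]
      have hpos : 0 ≤ ∑ i, b1 i := Finset.sum_nonneg fun i _ => hb1c.1 i
      have hne : ∑ i, b1 i ≠ 0 := by
        intro h
        rw [Finset.sum_eq_zero_iff_of_nonneg (fun i _ => hb1c.1 i)] at h
        have h0 : b1 = 0 := funext fun i => h i (Finset.mem_univ i)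
        rw [h0, T0, map_zero] at hpb1
        rw [h0, ← hpb1] at hb1ss
        simp at hb1ss
      refine ⟨fun i => (∑ i, b1 i)⁻¹ * b1 i, ⟨hb1c.smul (by positivity),
        fun i hi => hb1s i (right_ne_zero_of_mul hi), ?_⟩, ?_⟩
      · rw [← Finset.mul_sum, inv_mul_cancel₀ hne]
      · simp only [Tsm]
        rw [map_smul, hpb1, norm_smul, norm_inv, Real.norm_of_nonneg hpos, hb1ss, smul_smul]
        have : ((∑ i, b1 i)⁻¹ * (1 - ‖y‖) + (∑ i, b1 i)⁻¹ * ‖y‖)⁻¹ * (∑ i, b1 i)⁻¹ = 1 := by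
          rw [← mul_add]; simp [hne]
        rw [this, one_smul]
  obtain ⟨f⟩ := hf
  obtain ⟨g⟩ := hg
  exact ⟨f.symm.trans g⟩

/-- Finitely generated cones are finite intersections of half-spaces. -/
lemma exists_hrep {n : ℕ} (k : ℕ) (v : Fin k → Euc n) :
    ∃ H : Finset (Euc n), {x : Euc n | ∃ lam : Fin k → ℝ, (∀ i, 0 ≤ lam i) ∧
      x = ∑ i, lam i • v i} = {x | ∀ h ∈ H, 0 ≤ ⟪h, x⟫} := by
  classical
  induction k with
  | zero =>
    refine ⟨Finset.univ.image (fun i => EuclideanSpace.single i (1 : ℝ)) ∪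
      Finset.univ.image (fun i => - EuclideanSpace.single i (1 : ℝ)), ?_⟩
    ext x
    simp only [Set.mem_ofPred_eq, Finset.univ_eq_empty, Finset.sum_empty, Finset.mem_union,
      Finset.mem_image, Finset.mem_univ, true_and]
    constructor
    · rintro ⟨_, _, rfl⟩ h _; simp
    · intro hx
      refine ⟨0, fun i => i.elim0, ?_⟩
      ext i
      have h1 := hx _ (Or.inl ⟨i, rfl⟩)
      have h2 := hx _ (Or.inr ⟨i, rfl⟩)
      rw [inner_neg_left] at h2
      rw [EuclideanSpace.inner_single_left] at h1 h2
      simp at h1 h2 ⊢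
      linarith
  | succ k ih =>
    obtain ⟨H, hH⟩ := ih (fun i => v i.succ)
    set y := v 0 with hy
    have key : ∀ x : Euc n, (∃ lam : Fin (k + 1) → ℝ, (∀ i, 0 ≤ lam i) ∧
        x = ∑ i, lam i • v i) ↔ ∃ c : ℝ, 0 ≤ c ∧ ∀ h ∈ H, 0 ≤ ⟪h, x - c • y⟫ := by
      intro x
      constructor
      · rintro ⟨lam, hl, rfl⟩
        refine ⟨lam 0, hl 0, ?_⟩
        have : (∑ i, lam i • v i - lam 0 • y) ∈ {x | ∀ h ∈ H, 0 ≤ ⟪h, x⟫} := by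
          rw [← hH]
          refine ⟨fun i => lam i.succ, fun i => hl _, ?_⟩
          rw [Fin.sum_univ_succ]; simp [hy]
        exact this
      · rintro ⟨c, hc, h⟩
        have : x - c • y ∈ {x | ∀ h ∈ H, 0 ≤ ⟪h, x⟫} := h
        rw [← hH] at this
        obtain ⟨lam, hl, hx⟩ := this
        refine ⟨Fin.cons c lam, fun i => ?_, ?_⟩
        · refine Fin.cases ?_ (fun j => ?_) i
          · simpa using hc
          · simpa using hl j
        · rw [Fin.sum_univ_succ]
          simp only [Fin.cons_zero, Fin.cons_succ]
          rw [← hx]; simp [hy]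
    refine ⟨H.filter (fun h => 0 ≤ ⟪h, y⟫) ∪
      ((H.filter (fun h => 0 < ⟪h, y⟫) ×ˢ H.filter (fun h => ⟪h, y⟫ < 0)).image
        (fun q => ⟪q.1, y⟫ • q.2 - ⟪q.2, y⟫ • q.1)), ?_⟩
    ext x
    rw [Set.mem_ofPred_eq, key x, Set.mem_ofPred_eq]
    simp only [inner_sub_right, inner_smul_right]
    constructor
    · rintro ⟨c, hc, h⟩ g hg
      rw [Finset.mem_union, Finset.mem_filter, Finset.mem_image] at hg
      rcases hg with ⟨hg, h0⟩ | ⟨⟨a, b⟩, hab, rfl⟩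
      · have := h g hg
        have := mul_nonneg hc h0
        linarith
      · rw [Finset.mem_product, Finset.mem_filter, Finset.mem_filter] at hab
        obtain ⟨⟨ha, ha0⟩, hb, hb0⟩ := hab
        simp only at ha ha0 hb hb0 ⊢
        rw [inner_sub_left, real_inner_smul_left, real_inner_smul_left]
        have h1 := h a ha
        have h2 := h b hb
        nlinarith
    · intro h
      set L : Finset ℝ := insert 0 ((H.filter (fun h => ⟪h, y⟫ < 0)).image
        (fun h => ⟪h, x⟫ / ⟪h, y⟫)) with hL
      have hne : L.Nonempty := ⟨0, by simp [hL]⟩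
      have hle : ∀ z ∈ L, z ≤ L.max' hne := fun z hz => Finset.le_max' L z hz
      refine ⟨L.max' hne, hle 0 (by simp [hL]), fun g hg => ?_⟩
      rcases lt_or_ge ⟪g, y⟫ 0 with hneg | hpos
      · have := hle (⟪g, x⟫ / ⟪g, y⟫) (by
          rw [hL, Finset.mem_insert, Finset.mem_image]
          exact Or.inr ⟨g, by rw [Finset.mem_filter]; exact ⟨hg, hneg⟩, rfl⟩)
        rw [div_le_iff_of_neg hneg] at this
        linarith
      · have hgx : 0 ≤ ⟪g, x⟫ := h g (by
          rw [Finset.mem_union, Finset.mem_filter]; exact Or.inl ⟨hg, hpos⟩)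
        have hmem : L.max' hne ∈ L := Finset.max'_mem L hne
        generalize L.max' hne = m at hmem
        rw [hL, Finset.mem_insert, Finset.mem_image] at hmem
        rcases hmem with rfl | ⟨q, hq, rfl⟩
        · simpa using hgx
        · rw [Finset.mem_filter] at hq
          rcases hpos.eq_or_lt with h0 | hpos
          · rw [← h0]; simpa using hgx
          · have := h (⟪g, y⟫ • q - ⟪q, y⟫ • g) (by
              rw [Finset.mem_union, Finset.mem_image]
              refine Or.inr ⟨(g, q), ?_, rfl⟩
              rw [Finset.mem_product, Finset.mem_filter, Finset.mem_filter]
              exact ⟨⟨hg, hpos⟩, hq⟩)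
            rw [inner_sub_left, real_inner_smul_left, real_inner_smul_left] at this
            have hq2 := hq.2
            have e : ⟪q, x⟫ / ⟪q, y⟫ * ⟪g, y⟫ ≤ ⟪g, x⟫ := by
              rw [div_mul_eq_mul_div, div_le_iff_of_neg hq2]; linarith
            linarith

section FanLemmas

variable {n : ℕ} {Δ : Set (Set (Euc n))}

lemma IsFan.hrep (hΔ : IsFan Δ) {τ : Set (Euc n)} (hτ : τ ∈ Δ) :
    ∃ H : Finset (Euc n), τ = {x | ∀ h ∈ H, 0 ≤ ⟪h, x⟫} := by
  obtain ⟨k, v, -, rfl⟩ := hΔ.poly τ hτ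
  exact exists_hrep k v

lemma IsFan.isClosed (hΔ : IsFan Δ) {τ : Set (Euc n)} (hτ : τ ∈ Δ) : IsClosed τ := by
  obtain ⟨H, rfl⟩ := hΔ.hrep hτ
  simp only [Set.ofPred_forall]
  exact isClosed_iInter fun h => isClosed_iInter fun _ =>
    isClosed_le (by fun_prop) (by fun_prop)

lemma IsFan.zero_mem (hΔ : IsFan Δ) {τ : Set (Euc n)} (hτ : τ ∈ Δ) : (0 : Euc n) ∈ τ := by
  obtain ⟨H, rfl⟩ := hΔ.hrep hτ
  intro h _; simp

lemma IsFan.add_mem (hΔ : IsFan Δ) {τ : Set (Euc n)} (hτ : τ ∈ Δ) {x y : Euc n}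
    (hx : x ∈ τ) (hy : y ∈ τ) : x + y ∈ τ := by
  obtain ⟨H, rfl⟩ := hΔ.hrep hτ
  intro h hh; rw [inner_add_right]; exact add_nonneg (hx h hh) (hy h hh)

lemma IsFan.smul_mem (hΔ : IsFan Δ) {τ : Set (Euc n)} (hτ : τ ∈ Δ) {x : Euc n}
    (hx : x ∈ τ) {c : ℝ} (hc : 0 ≤ c) : c • x ∈ τ := by
  obtain ⟨H, rfl⟩ := hΔ.hrep hτ
  intro h hh; rw [inner_smul_right]; exact mul_nonneg hc (hx h hh)

lemma IsFan.sum_mem (hΔ : IsFan Δ) {τ : Set (Euc n)} (hτ : τ ∈ Δ) {ι : Type*} (s : Finset ι)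
    (f : ι → Euc n) (hf : ∀ i ∈ s, f i ∈ τ) : ∑ i ∈ s, f i ∈ τ := by
  classical
  induction s using Finset.induction_on with
  | empty => simpa using hΔ.zero_mem hτ
  | insert a s ha ih =>
    rw [Finset.sum_insert ha]
    exact hΔ.add_mem hτ (hf a (by simp)) (ih fun i hi => hf i (by simp [hi]))

lemma IsFan.face_iff (hΔ : IsFan Δ) {σ τ : Set (Euc n)} (hσ : σ ∈ Δ) (hτ : τ ∈ Δ) :
    IsFaceOf σ τ ↔ σ ⊆ τ := by
  constructor
  · rintro ⟨u, -, rfl⟩; exact Set.inter_subset_left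
  · intro h
    have := (hΔ.inter_face σ hσ τ hτ).2
    rwa [Set.inter_eq_left.mpr h] at this

lemma IsFan.zero_cone (hΔ : IsFan Δ) {τ : Set (Euc n)} (hτ : τ ∈ Δ) :
    ({0} : Set (Euc n)) ∈ Δ := by
  refine hΔ.face_mem τ hτ _ ?_
  obtain ⟨H, hH⟩ := hΔ.hrep hτ
  refine ⟨∑ h ∈ H, h, ?_, ?_⟩
  · intro x hx
    rw [sum_inner]
    rw [hH] at hx
    exact Finset.sum_nonneg fun h hh => hx h hh
  · ext x
    constructor
    · rintro rfl; exact ⟨hΔ.zero_mem hτ, by simp⟩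
    · rintro ⟨hx, h0⟩
      rw [Set.mem_ofPred_eq, sum_inner] at h0
      have hx' := hx
      rw [hH] at hx'
      rw [Finset.sum_eq_zero_iff_of_nonneg (fun h hh => hx' h hh)] at h0
      rw [← hΔ.strictconv τ hτ]
      refine ⟨hx, ?_⟩
      rw [Set.mem_neg, hH]
      intro h hh
      rw [inner_neg_right, h0 h hh]; simp

/-- Relative interior point of a cone. -/
def RelInt (τ : Set (Euc n)) (x : Euc n) : Prop :=
  x ∈ τ ∧ ∀ u ∈ dualCone τ, (∃ y ∈ τ, ⟪u, y⟫ ≠ 0) → 0 < ⟪u, x⟫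

lemma RelInt.add (hΔ : IsFan Δ) {τ : Set (Euc n)} (hτ : τ ∈ Δ) {x y : Euc n}
    (hx : RelInt τ x) (hy : y ∈ τ) : RelInt τ (x + y) :=
  ⟨hΔ.add_mem hτ hx.1 hy, fun u hu h => by
    rw [inner_add_right]; exact add_pos_of_pos_of_nonneg (hx.2 u hu h) (hu y hy)⟩

lemma RelInt.smul (hΔ : IsFan Δ) {τ : Set (Euc n)} (hτ : τ ∈ Δ) {x : Euc n}
    (hx : RelInt τ x) {c : ℝ} (hc : 0 < c) : RelInt τ (c • x) :=
  ⟨hΔ.smul_mem hτ hx.1 hc.le, fun u hu h => by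
    rw [inner_smul_right]; exact mul_pos hc (hx.2 u hu h)⟩

lemma RelInt.subset (hΔ : IsFan Δ) {τ τ' : Set (Euc n)} (hτ : τ ∈ Δ) (hτ' : τ' ∈ Δ)
    {x : Euc n} (hx : RelInt τ x) (hx' : x ∈ τ') : τ ⊆ τ' := by
  obtain ⟨u, hu, he⟩ := (hΔ.inter_face τ hτ τ' hτ').1
  have h0 : x ∈ τ ∩ {x | ⟪u, x⟫ = 0} := by rw [← he]; exact ⟨hx.1, hx'⟩
  intro y hy
  have : y ∈ τ ∩ τ' := by
    rw [he]; refine ⟨hy, ?_⟩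
    by_contra hne
    have := hx.2 u hu ⟨y, hy, hne⟩
    rw [h0.2] at this
    exact lt_irrefl _ this
  exact this.2

lemma relInt_zero : RelInt ({0} : Set (Euc n)) 0 :=
  ⟨rfl, fun u _ ⟨y, hy, h⟩ => by
    rw [Set.mem_singleton_iff] at hy; subst hy; simp at h⟩

lemma IsFan.exit (hΔ : IsFan Δ) {σ τ : Set (Euc n)} (hτ : τ ∈ Δ) (hστ : σ ⊆ τ)
    {p : Euc n} (hp : RelInt σ p) {x y : Euc n} (hx : x ∈ τ) (hy : y ∈ τ)
    {u : Euc n} (hu : u ∈ dualCone τ) (huσ : ∀ z ∈ σ, ⟪u, z⟫ = 0) (huy : 0 < ⟪u, y⟫) :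
    ∃ c : ℝ, 0 ≤ c ∧ ∃ N : ℝ, ∃ τ' ∈ Δ, τ' ⊂ τ ∧ σ ⊆ τ' ∧ x - c • y + N • p ∈ τ' := by
  classical
  obtain ⟨H0, hH0⟩ := hΔ.hrep hτ
  obtain ⟨H, hH, huH⟩ : ∃ H : Finset (Euc n), τ = {x | ∀ h ∈ H, 0 ≤ ⟪h, x⟫} ∧ u ∈ H := by
    refine ⟨insert u H0, ?_, by simp⟩
    ext z
    simp only [Set.mem_ofPred_eq, Finset.forall_mem_insert]
    constructor
    · intro hz
      refine ⟨hu z hz, ?_⟩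
      rw [hH0] at hz; exact hz
    · rintro ⟨-, h⟩; rw [hH0]; exact h
  have hHd : ∀ h ∈ H, h ∈ dualCone τ := by
    intro h hh z hz; rw [hH] at hz; exact hz h hh
  set F := H.filter (fun h => (∀ z ∈ σ, ⟪h, z⟫ = 0) ∧ 0 < ⟪h, y⟫) with hF
  have hFne : F.Nonempty := ⟨u, by rw [hF, Finset.mem_filter]; exact ⟨huH, huσ, huy⟩⟩
  obtain ⟨g, hg, hmin⟩ := F.exists_min_image (fun h => ⟪h, x⟫ / ⟪h, y⟫) hFne
  rw [hF, Finset.mem_filter] at hg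
  obtain ⟨hgH, hgσ, hgy⟩ := hg
  set c := ⟪g, x⟫ / ⟪g, y⟫ with hc
  have hc0 : 0 ≤ c := div_nonneg (hHd g hgH x hx) hgy.le
  have h1 : ∀ h ∈ H, (∀ z ∈ σ, ⟪h, z⟫ = 0) → 0 ≤ ⟪h, x - c • y⟫ := by
    intro h hh hz
    rw [inner_sub_right, inner_smul_right]
    rcases (hHd h hh y hy).eq_or_lt with h0 | h0
    · rw [← h0]; simpa using hHd h hh x hx
    · have := hmin h (by rw [hF, Finset.mem_filter]; exact ⟨hh, hz, h0⟩)
      rw [le_div_iff₀ h0] at this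
      linarith
  have h2 : ∀ h ∈ H, (¬ ∀ z ∈ σ, ⟪h, z⟫ = 0) → 0 < ⟪h, p⟫ := by
    intro h hh hz
    push Not at hz
    exact hp.2 h (fun z hz => hHd h hh z (hστ hz)) hz
  set N : ℝ := ∑ h ∈ H, |⟪h, x - c • y⟫| / |⟪h, p⟫| with hN
  have hN0 : 0 ≤ N := Finset.sum_nonneg fun h _ => by positivity
  have hmem : x - c • y + N • p ∈ τ := by
    rw [hH]
    intro h hh
    rw [inner_add_right, inner_smul_right]
    by_cases hz : ∀ z ∈ σ, ⟪h, z⟫ = 0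
    · rw [hz p hp.1]; simpa using h1 h hh hz
    · have hpp := h2 h hh hz
      have : |⟪h, x - c • y⟫| / |⟪h, p⟫| ≤ N :=
        Finset.single_le_sum (f := fun h => |⟪h, x - c • y⟫| / |⟪h, p⟫|)
          (fun h _ => by positivity) hh
      rw [abs_of_pos hpp, div_le_iff₀ hpp] at this
      have := neg_abs_le ⟪h, x - c • y⟫
      linarith
  refine ⟨c, hc0, N, τ ∩ {x | ⟪g, x⟫ = 0}, hΔ.face_mem τ hτ _ ⟨g, hHd g hgH, rfl⟩, ?_, ?_, ?_⟩
  · refine ⟨Set.inter_subset_left, fun h => ?_⟩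
    have := (h hy).2
    rw [Set.mem_ofPred_eq] at this
    linarith
  · exact fun z hz => ⟨hστ hz, hgσ z hz⟩
  · refine ⟨hmem, ?_⟩
    rw [Set.mem_ofPred_eq, inner_add_right, inner_smul_right, hgσ p hp.1, inner_sub_right,
      inner_smul_right, hc]
    field_simp; simp

/-- Induction over the cones of a fan. -/
lemma IsFan.induct (hΔ : IsFan Δ) {Q : Set (Euc n) → Prop}
    (h : ∀ τ ∈ Δ, (∀ τ' ∈ Δ, τ' ⊂ τ → Q τ') → Q τ) : ∀ τ ∈ Δ, Q τ := by
  intro τ hτ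
  exact (hΔ.finite.wellFoundedOn (r := (· ⊂ ·))).induction hτ h

lemma IsFan.exit0 (hΔ : IsFan Δ) {τ : Set (Euc n)} (hτ : τ ∈ Δ)
    {x y : Euc n} (hx : x ∈ τ) (hy : y ∈ τ) (hy0 : y ≠ 0) :
    ∃ c : ℝ, 0 ≤ c ∧ ∃ τ' ∈ Δ, τ' ⊂ τ ∧ x - c • y ∈ τ' := by
  obtain ⟨u, hu, he⟩ := (hΔ.face_iff (hΔ.zero_cone hτ) hτ).mpr
    (Set.singleton_subset_iff.mpr (hΔ.zero_mem hτ))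
  have huy : 0 < ⟪u, y⟫ := by
    refine lt_of_le_of_ne (hu y hy) fun h => hy0 ?_
    have : y ∈ ({0} : Set (Euc n)) := by rw [he]; exact ⟨hy, h.symm⟩
    exact this
  obtain ⟨c, hc, N, τ', h1, h2, -, h3⟩ := hΔ.exit hτ
    (Set.singleton_subset_iff.mpr (hΔ.zero_mem hτ)) relInt_zero hx hy hu
    (by intro z hz; rw [Set.mem_singleton_iff] at hz; simp [hz]) huy
  exact ⟨c, hc, τ', h1, h2, by simpa using h3⟩

lemma IsFan.rays (hΔ : IsFan Δ) (u : Euc n) : ∀ τ ∈ Δ,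
    (∀ ρ ∈ Δ, ρ ⊆ τ → coneDim ρ = 1 → ∀ x ∈ ρ, ⟪u, x⟫ = 0) → ∀ x ∈ τ, ⟪u, x⟫ = 0 := by
  refine hΔ.induct ?_
  intro τ hτ ih hr x hx
  by_contra hne
  have ih' : ∀ τ' ∈ Δ, τ' ⊂ τ → ∀ z ∈ τ', ⟪u, z⟫ = 0 := fun τ' h h' =>
    ih τ' h h' fun ρ hρ hρs => hr ρ hρ (hρs.trans h'.1)
  have hx0 : x ≠ 0 := by rintro rfl; simp at hne
  by_cases hall : ∀ y ∈ τ, y ∈ Submodule.span ℝ {x}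
  · have : Submodule.span ℝ τ = Submodule.span ℝ {x} :=
      le_antisymm (Submodule.span_le.mpr hall)
        (Submodule.span_mono (Set.singleton_subset_iff.mpr hx))
    refine hne (hr τ hτ le_rfl ?_ x hx)
    rw [coneDim, this, finrank_span_singleton hx0]
  · push Not at hall
    obtain ⟨y, hy, hyx⟩ := hall
    have hy0 : y ≠ 0 := by rintro rfl; exact hyx (Submodule.zero_mem _)
    obtain ⟨a, ha, τ₁, h1, h1', h1''⟩ := hΔ.exit0 hτ hx hy hy0
    obtain ⟨b, hb, τ₂, h2, h2', h2''⟩ := hΔ.exit0 hτ hy hx hx0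
    have e1 := ih' _ h1 h1' _ h1''
    have e2 := ih' _ h2 h2' _ h2''
    rw [inner_sub_right, inner_smul_right] at e1 e2
    have hab : a * b = 1 := by
      have : ⟪u, x⟫ * (1 - a * b) = 0 := by
        linear_combination e1 + a * e2
      rcases mul_eq_zero.mp this with h | h
      · exact absurd h hne
      · linarith
    have hneg : -(x - a • y) ∈ τ := by
      have : -(x - a • y) = a • (y - b • x) := by
        rw [smul_sub, smul_smul, hab, one_smul]; abel
      rw [this]
      exact hΔ.smul_mem hτ (h2'.1 h2'') ha
    have hz : x - a • y ∈ ({0} : Set (Euc n)) := by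
      rw [← hΔ.strictconv τ hτ]; exact ⟨h1'.1 h1'', hneg⟩
    have hz' : x = a • y := sub_eq_zero.mp hz
    apply hyx
    rw [Submodule.mem_span_singleton]
    refine ⟨b, ?_⟩
    rw [hz', smul_smul, mul_comm, hab, one_smul]

lemma IsFan.relInt_v (hΔ : IsFan Δ) {u : Set (Euc n) → Euc n} (hu : IsUnitVecChoice Δ u)
    {τ : Set (Euc n)} (hτ : τ ∈ Δ) : RelInt τ (vVec Δ u τ) := by
  have hfin : {ρ | ρ ∈ Δ ∧ IsFaceOf ρ τ ∧ coneDim ρ = 1}.Finite :=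
    hΔ.finite.subset fun ρ h => h.1
  have hv : vVec Δ u τ = ∑ ρ ∈ hfin.toFinset, u ρ := by
    rw [vVec, finsum_mem_eq_finite_toFinset_sum _ hfin]
  have hmem : ∀ ρ ∈ hfin.toFinset, ρ ∈ Δ ∧ ρ ⊆ τ ∧ coneDim ρ = 1 := by
    intro ρ h
    rw [Set.Finite.mem_toFinset] at h
    exact ⟨h.1, (hΔ.face_iff h.1 hτ).mp h.2.1, h.2.2⟩
  have hin : ∀ ρ ∈ hfin.toFinset, u ρ ∈ τ := fun ρ h =>
    (hmem ρ h).2.1 (hu ρ (hmem ρ h).1 (hmem ρ h).2.2).1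
  rw [hv]
  refine ⟨hΔ.sum_mem hτ _ _ hin, fun w hw ⟨y, hy, hwy⟩ => ?_⟩
  rw [inner_sum]
  refine lt_of_le_of_ne (Finset.sum_nonneg fun ρ h => hw _ (hin ρ h)) fun h0 => hwy ?_
  have h0 := (Finset.sum_eq_zero_iff_of_nonneg (fun ρ h => hw _ (hin ρ h))).mp h0.symm
  refine hΔ.rays w τ hτ (fun ρ hρ hρτ hd x hx => ?_) y hy
  have h1 := h0 ρ (by
    rw [Set.Finite.mem_toFinset]; exact ⟨hρ, (hΔ.face_iff hρ hτ).mpr hρτ, hd⟩)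
  obtain ⟨h2, h3⟩ := hu ρ hρ hd
  have hne : u ρ ≠ 0 := by intro h; rw [h] at h3; simp at h3
  have hx' : x ∈ Submodule.span ℝ ρ := Submodule.subset_span hx
  obtain ⟨c, hc⟩ := (finrank_eq_one_iff_of_nonzero' (⟨u ρ, Submodule.subset_span h2⟩ :
    Submodule.span ℝ ρ) (by simpa using hne)).mp hd ⟨x, hx'⟩
  have hc' : c • u ρ = x := congrArg Subtype.val hc
  rw [← hc', inner_smul_right, h1, mul_zero]

lemma IsCompleteFan.star (hΔ : IsCompleteFan Δ) {σ : Set (Euc n)} (hσ : σ ∈ Δ) {p : Euc n}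
    (hp : RelInt σ p) (w : Euc n) :
    ∃ τ ∈ Δ, σ ⊆ τ ∧ ∃ N : ℝ, w + N • p ∈ τ := by
  have h1 : ∀ᶠ z in nhds p, ∀ τ ∈ Δ, p ∉ τ → z ∉ τ := by
    rw [Filter.eventually_all_finite hΔ.1.finite]
    intro τ hτ
    by_cases h : p ∈ τ
    · simp [h]
    · filter_upwards [(hΔ.1.isClosed hτ).isOpen_compl.mem_nhds h] with z hz _ using hz
  have h2 : Filter.Tendsto (fun m : ℕ => p + (1 / ((m : ℝ) + 1)) • w) Filter.atTop (nhds p) := by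
    have := (tendsto_one_div_add_atTop_nhds_zero_nat (𝕜 := ℝ)).smul_const w
    simpa using this.const_add p
  obtain ⟨m, hm⟩ := (h2.eventually h1).exists
  obtain ⟨τ, hτ, hmτ⟩ : p + (1 / ((m : ℝ) + 1)) • w ∈ ⋃₀ Δ := by rw [hΔ.2]; trivial
  have hpτ : p ∈ τ := by by_contra h; exact hm τ hτ h hmτ
  refine ⟨τ, hτ, hp.subset hΔ.1 hσ hτ hpτ, (m : ℝ) + 1, ?_⟩
  have hpos : (0 : ℝ) < m + 1 := by positivity
  have := hΔ.1.smul_mem hτ hmτ hpos.le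
  rw [smul_add, smul_smul, mul_one_div_cancel hpos.ne', one_smul] at this
  rwa [add_comm]

end FanLemmas

section Comb

variable {n : ℕ} {Δ : Set (Set (Euc n))}

lemma exists_chain_rep (hΔ : IsFan Δ) [Fintype Δ] {u : Set (Euc n) → Euc n}
    (hu : IsUnitVecChoice Δ u) (s : Δ) : ∀ τ ∈ Δ, s.1 ⊆ τ → ∀ t ∈ τ,
    ∃ b : Δ → ℝ, ChainFn b ∧ (∀ i, b i ≠ 0 → s < i ∧ i.1 ⊆ τ) ∧
      t - ∑ i, b i • vVec Δ u i.1 ∈ Submodule.span ℝ s.1 := by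
  classical
  refine hΔ.induct ?_
  intro τ hτ ih hsτ t ht
  by_cases heq : s.1 = τ
  · refine ⟨0, ⟨fun _ => le_rfl, fun i j h => absurd rfl h⟩, fun i h => absurd rfl h, ?_⟩
    simp only [Pi.zero_apply, zero_smul, Finset.sum_const_zero, sub_zero]
    rw [heq]; exact Submodule.subset_span ht
  · obtain ⟨w, hw, he⟩ := (hΔ.face_iff s.2 hτ).mpr hsτ
    have hvτ := hΔ.relInt_v hu hτ
    have hws : ∀ z ∈ s.1, ⟪w, z⟫ = 0 := by
      intro z hz; rw [he] at hz; exact hz.2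
    have hwv : 0 < ⟪w, vVec Δ u τ⟫ := by
      refine hvτ.2 w hw ?_
      by_contra hcon
      push Not at hcon
      refine heq (hsτ.antisymm fun z hz => ?_)
      rw [he]; exact ⟨hz, hcon z hz⟩
    have hps := hΔ.relInt_v hu s.2
    obtain ⟨c, hc, N, τ', h1, h2, h3, h4⟩ := hΔ.exit hτ hsτ hps ht hvτ.1 hw hws hwv
    obtain ⟨b, hb, hbs, hbt⟩ := ih τ' h1 h2 h3 _ h4
    set T : Δ := ⟨τ, hτ⟩
    have hbT : b T = 0 := by
      by_contra h
      exact h2.2 (hbs T h).2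
    refine ⟨Function.update b T c, hb.insert_le (fun i hi => Or.inl ((hbs i hi).2.trans h2.1)) hc,
      fun i hi => ?_, ?_⟩
    · by_cases hiT : i = T
      · subst hiT
        exact ⟨lt_of_le_of_ne hsτ fun h => heq (congrArg Subtype.val h), le_rfl⟩
      · rw [Function.update_of_ne hiT] at hi
        exact ⟨(hbs i hi).1, (hbs i hi).2.trans h2.1⟩
    · rw [sum_update_smul (fun i : Δ => vVec Δ u i.1), hbT, sub_zero]
      have := Submodule.sub_mem _ hbt
        (Submodule.smul_mem _ N (Submodule.subset_span (R := ℝ) hps.1))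
      convert this using 1
      change _ - (_ + c • vVec Δ u τ) = _
      abel

lemma mem_span_cone (hΔ : IsFan Δ) {σ : Set (Euc n)} (hσ : σ ∈ Δ) {m : Euc n}
    (hm : m ∈ Submodule.span ℝ σ) : ∃ a ∈ σ, ∃ b ∈ σ, m = a - b := by
  induction hm using Submodule.span_induction with
  | mem x hx => exact ⟨x, hx, 0, hΔ.zero_mem hσ, by simp⟩
  | zero => exact ⟨0, hΔ.zero_mem hσ, 0, hΔ.zero_mem hσ, by simp⟩
  | add x y _ _ ihx ihy =>
    obtain ⟨a, ha, b, hb, rfl⟩ := ihx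
    obtain ⟨a', ha', b', hb', rfl⟩ := ihy
    exact ⟨a + a', hΔ.add_mem hσ ha ha', b + b', hΔ.add_mem hσ hb hb', by abel⟩
  | smul c x _ ih =>
    obtain ⟨a, ha, b, hb, rfl⟩ := ih
    rcases le_total 0 c with hc | hc
    · exact ⟨c • a, hΔ.smul_mem hσ ha hc, c • b, hΔ.smul_mem hσ hb hc, smul_sub _ _ _⟩
    · refine ⟨(-c) • b, hΔ.smul_mem hσ hb (by linarith), (-c) • a,
        hΔ.smul_mem hσ ha (by linarith), ?_⟩
      rw [smul_sub, neg_smul, neg_smul]; abel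

lemma chain_top (hΔ : IsFan Δ) [Fintype Δ] {u : Set (Euc n) → Euc n}
    (hu : IsUnitVecChoice Δ u) (s : Δ) {b : Δ → ℝ} (hb : ChainFn b)
    (hbs : ∀ i, b i ≠ 0 → s < i) {y : Euc n} (hy : RelInt s.1 y) :
    ∃ i : Δ, ((i = s ∧ b = 0) ∨ b i ≠ 0) ∧ RelInt i.1 (y + ∑ i, b i • vVec Δ u i.1) := by
  classical
  by_cases h0 : b = 0
  · exact ⟨s, Or.inl ⟨rfl, h0⟩, by simpa [h0] using hy⟩
  · have hne : (Finset.univ.filter fun i => b i ≠ 0).Nonempty := by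
      obtain ⟨i, hi⟩ := Function.ne_iff.mp h0
      exact ⟨i, by simpa using hi⟩
    obtain ⟨i, hi⟩ := Finset.exists_maximal hne
    have hbi : b i ≠ 0 := by simpa using hi.1
    have hle : ∀ j, b j ≠ 0 → j ≤ i := by
      intro j hj
      rcases hb.2 i j hbi hj with h | h
      · exact hi.2 (by simpa using hj) h
      · exact h
    refine ⟨i, Or.inr hbi, ?_⟩
    rw [← Finset.add_sum_erase _ _ (Finset.mem_univ i), add_left_comm]
    refine RelInt.add hΔ i.2 ((hΔ.relInt_v hu i.2).smul hΔ i.2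
      (lt_of_le_of_ne (hb.1 i) hbi.symm)) (hΔ.add_mem i.2 ((hbs i hbi).le hy.1) ?_)
    refine hΔ.sum_mem i.2 _ _ fun j _ => ?_
    by_cases hj : b j = 0
    · rw [hj, zero_smul]; exact hΔ.zero_mem i.2
    · exact hle j hj (hΔ.smul_mem j.2 (hΔ.relInt_v hu j.2).1 (hb.1 j))

lemma chain_unique (hΔ : IsFan Δ) [Fintype Δ] {u : Set (Euc n) → Euc n}
    (hu : IsUnitVecChoice Δ u) (s : Δ) {b b' : Δ → ℝ} (hb : ChainFn b) (hb' : ChainFn b')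
    (hbs : ∀ i, b i ≠ 0 → s < i) (hbs' : ∀ i, b' i ≠ 0 → s < i)
    (h : ∑ i, b i • vVec Δ u i.1 - ∑ i, b' i • vVec Δ u i.1 ∈ Submodule.span ℝ s.1) :
    b = b' := by
  set d : Δ → ℝ := fun i => b i - min (b i) (b' i) with hd
  set d' : Δ → ℝ := fun i => b' i - min (b i) (b' i) with hd'
  have aux : ∀ i, d i ≠ 0 → b i ≠ 0 := by
    intro i hi h0; apply hi
    simp only [hd, h0, min_eq_left (hb'.1 i), sub_zero]
  have aux' : ∀ i, d' i ≠ 0 → b' i ≠ 0 := by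
    intro i hi h0; apply hi
    simp only [hd', h0, min_eq_right (hb.1 i), sub_zero]
  have hdc : ChainFn d := hb.mono (fun i => sub_nonneg.mpr (min_le_left _ _)) aux
  have hdc' : ChainFn d' := hb'.mono (fun i => sub_nonneg.mpr (min_le_right _ _)) aux'
  obtain ⟨m1, hm1, m2, hm2, hm⟩ := mem_span_cone hΔ s.2 h
  have hps := hΔ.relInt_v hu s.2
  obtain ⟨i, hi, hri⟩ := chain_top hΔ hu s hdc (fun i hi => hbs i (aux i hi))
    (hps.add hΔ s.2 hm2)
  obtain ⟨i', hi', hri'⟩ := chain_top hΔ hu s hdc' (fun i hi => hbs' i (aux' i hi))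
    (hps.add hΔ s.2 hm1)
  have hsum : vVec Δ u s.1 + m2 + ∑ i, d i • vVec Δ u i.1
      = vVec Δ u s.1 + m1 + ∑ i, d' i • vVec Δ u i.1 := by
    simp only [hd, hd', sub_smul, Finset.sum_sub_distrib]
    rw [sub_eq_sub_iff_add_eq_add] at hm
    have : ∑ i, b i • vVec Δ u i.1 = m1 + ∑ i, b' i • vVec Δ u i.1 - m2 := by
      rw [← hm]; abel
    rw [this]; abel
  rw [hsum] at hri
  have hii : i = i' := by
    apply Subtype.ext
    exact (hri.subset hΔ i.2 i'.2 hri'.1).antisymm (hri'.subset hΔ i'.2 i.2 hri.1)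
  subst hii
  have hz : d = 0 ∧ d' = 0 := by
    rcases hi with ⟨rfl, h1⟩ | h1
    · rcases hi' with ⟨-, h2⟩ | h2
      · exact ⟨h1, h2⟩
      · exact absurd (hbs' _ (aux' _ h2)) (lt_irrefl _)
    · rcases hi' with ⟨rfl, h2⟩ | h2
      · exact absurd (hbs _ (aux _ h1)) (lt_irrefl _)
      · exfalso
        simp only [hd, hd'] at h1 h2
        rcases min_choice (b i) (b' i) with h3 | h3 <;> rw [h3] at h1 h2 <;> simp at h1 h2
  ext j
  have e1 := congrFun hz.1 j
  have e2 := congrFun hz.2 j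
  simp only [hd, hd', Pi.zero_apply] at e1 e2
  linarith

lemma enum_chain {I : Type*} [PartialOrder I] (T : Finset I) {k : ℕ} (hk : T.card = k)
    (hT : ∀ i ∈ T, ∀ j ∈ T, i ≤ j ∨ j ≤ i) :
    ∃ t : Fin k → I, StrictMono t ∧ ∀ i, i ∈ T ↔ ∃ j, t j = i := by
  classical
  let T' : Finset (LinearExtension I) := T
  let f := T'.orderEmbOfFin hk
  have hmem : ∀ j, (f j : I) ∈ T := fun j => T'.orderEmbOfFin_mem hk j
  refine ⟨fun j => (f j : I), ?_, fun i => ?_⟩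
  · intro a b hab
    have h1 : f a < f b := f.strictMono hab
    rcases hT _ (hmem a) _ (hmem b) with h | h
    · exact lt_of_le_of_ne h fun he => h1.ne he
    · exact absurd (toLinearExtension.monotone h) (not_le.mpr h1)
  · have := T'.range_orderEmbOfFin hk
    have h2 : i ∈ Set.range f ↔ i ∈ T := by
      rw [this]; exact Iff.rfl
    exact h2.symm

lemma flag_strictMono (hΔ : IsFan Δ) {k : ℕ} {τ : Fin (k + 1) → Set (Euc n)}
    (hτ : IsFlag Δ τ) : StrictMono τ := by
  rw [Fin.strictMono_iff_lt_succ]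
  intro i
  exact lt_of_le_of_ne ((hΔ.face_iff (hτ.1 _) (hτ.1 _)).mp (hτ.2 i).1) (hτ.2 i).2

lemma flag_of_strictMono (hΔ : IsFan Δ) {k : ℕ} {t : Fin (k + 1) → Δ}
    (ht : StrictMono t) : IsFlag Δ (fun i => (t i).1) := by
  refine ⟨fun i => (t i).2, fun i => ?_⟩
  have : t i.castSucc < t i.succ := ht i.castSucc_lt_succ
  exact ⟨(hΔ.face_iff (t _).2 (t _).2).mpr this.le, fun h => this.ne (Subtype.ext h)⟩

lemma sum_enum {I E : Type*} [Fintype I] [AddCommGroup E] [Module ℝ E]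
    (v : I → E) (b : I → ℝ) {k : ℕ} {t : Fin k → I} (ht : Function.Injective t)
    (hb : ∀ i, b i ≠ 0 → ∃ j, t j = i) :
    ∑ i, b i • v i = ∑ j, b (t j) • v (t j) := by
  classical
  rw [← Finset.sum_image (s := Finset.univ) (g := t) (f := fun i => b i • v i)
    (fun a _ b _ h => ht h)]
  symm
  apply Finset.sum_subset (Finset.subset_univ _)
  intro i _ hi
  by_contra h
  obtain ⟨j, hj⟩ := hb i fun h0 => h (by rw [h0, zero_smul])
  exact hi (by rw [Finset.mem_image]; exact ⟨j, Finset.mem_univ _, hj⟩)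

lemma eDual_eq (hΔ : IsFan Δ) [Fintype Δ] {u : Set (Euc n) → Euc n}
    (s : Δ) (hs0 : s.1 ≠ {0}) :
    eDualCell Δ u s.1 = {x | ‖x‖ = 1 ∧ ∃ b : Δ → ℝ, ChainFn b ∧ (∀ i, b i ≠ 0 → s ≤ i) ∧
      x = ∑ i, b i • vVec Δ u i.1} := by
  classical
  have hne : ∀ τ ∈ Δ, s.1 ⊆ τ → τ ≠ {0} := by
    rintro τ hτ h rfl
    exact hs0 (h.antisymm (Set.singleton_subset_iff.mpr (hΔ.zero_mem s.2)))
  ext x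
  simp only [eDualCell, Set.mem_iUnion]
  constructor
  · rintro ⟨k, τ, ⟨hfl, hface⟩, hx⟩
    have hs := (hΔ.face_iff s.2 (hfl.1 0)).mp hface
    rw [dSet, if_neg (hne _ (hfl.1 0) hs)] at hx
    obtain ⟨⟨μ, hμ, hxμ⟩, hx1⟩ := hx
    have hmono := (flag_strictMono hΔ hfl).monotone
    set t : Fin (k + 1) → Δ := fun i => ⟨τ i, hfl.1 i⟩ with ht
    set b : Δ → ℝ := fun j => ∑ i, if t i = j then μ i else 0 with hb
    have hbne : ∀ j, b j ≠ 0 → ∃ i, t i = j := by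
      intro j hj
      obtain ⟨i, -, hi⟩ := Finset.exists_ne_zero_of_sum_ne_zero hj
      by_contra hcon
      push Not at hcon
      exact hi (if_neg (hcon i))
    refine ⟨by simpa using hx1, b, ⟨fun j => Finset.sum_nonneg fun i _ => ?_, ?_⟩, ?_, ?_⟩
    · split_ifs
      · exact hμ i
      · exact le_rfl
    · intro i j hi hj
      obtain ⟨i, rfl⟩ := hbne i hi
      obtain ⟨j, rfl⟩ := hbne j hj
      rcases le_total i j with h | h
      · exact Or.inl (hmono h)
      · exact Or.inr (hmono h)
    · intro i hi
      obtain ⟨i, rfl⟩ := hbne i hi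
      exact hs.trans (hmono (Fin.zero_le i))
    · rw [hxμ]
      simp only [hb, Finset.sum_smul]
      rw [Finset.sum_comm]
      refine Finset.sum_congr rfl fun i _ => ?_
      simp [ite_smul, ht]
  · rintro ⟨hx1, b, hb, hbs, rfl⟩
    set T : Finset Δ := Finset.univ.filter fun i => b i ≠ 0 with hT
    have hTne : T.Nonempty := by
      rw [Finset.nonempty_iff_ne_empty]
      intro h
      have : ∀ i, b i = 0 := by
        intro i; by_contra hi
        have : i ∈ T := by rw [hT, Finset.mem_filter]; exact ⟨Finset.mem_univ _, hi⟩
        rw [h] at this; simp at this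
      simp [this] at hx1
    obtain ⟨k, hk⟩ : ∃ k, T.card = k + 1 := ⟨T.card - 1, by have := hTne.card_pos; omega⟩
    have hTm : ∀ i, i ∈ T ↔ b i ≠ 0 := by intro i; simp [hT]
    obtain ⟨t, ht, htT⟩ := enum_chain T hk fun i hi j hj =>
      hb.2 i j ((hTm i).mp hi) ((hTm j).mp hj)
    have hs0 : s ≤ t 0 := hbs _ ((hTm _).mp ((htT _).mpr ⟨0, rfl⟩))
    refine ⟨k, fun i => (t i).1, ⟨flag_of_strictMono hΔ ht,
      (hΔ.face_iff s.2 (t 0).2).mpr hs0⟩, ?_⟩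
    rw [dSet, if_neg (hne _ (t 0).2 hs0)]
    refine ⟨⟨fun j => b (t j), fun j => hb.1 _, ?_⟩, by simpa using hx1⟩
    exact sum_enum (fun i : Δ => vVec Δ u i.1) b ht.injective
      fun i hi => (htT i).mp ((hTm i).mpr hi)

lemma dSet_subset {u : Set (Euc n) → Euc n} {k : ℕ} (τ : Fin (k + 1) → Set (Euc n)) :
    dSet Δ u τ ⊆ Metric.closedBall 0 1 := by
  rw [dSet]
  split_ifs
  · simp
  · exact Set.inter_subset_right
  · exact Set.inter_subset_right.trans Metric.sphere_subset_closedBall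

lemma eDual_subset {u : Set (Euc n) → Euc n} (σ : Set (Euc n)) :
    eDualCell Δ u σ ⊆ Metric.closedBall 0 1 := by
  simp only [eDualCell, Set.iUnion_subset_iff]
  exact fun k τ _ => dSet_subset τ

lemma eDual_zero (hΔ : IsCompleteFan Δ) [Fintype Δ] {u : Set (Euc n) → Euc n}
    (hu : IsUnitVecChoice Δ u) (h0 : ({0} : Set (Euc n)) ∈ Δ) :
    eDualCell Δ u {0} = Metric.closedBall 0 1 := by
  classical
  refine (eDual_subset _).antisymm fun x hx => ?_
  set s : Δ := ⟨{0}, h0⟩ with hs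
  obtain ⟨τ, hτ, hsτ, N, hN⟩ := hΔ.star h0 relInt_zero x
  rw [smul_zero, add_zero] at hN
  obtain ⟨b, hb, hbs, hbx⟩ := exists_chain_rep hΔ.1 hu s τ hτ hsτ x hN
  have hbx : x = ∑ i, b i • vVec Δ u i.1 := by
    have : Submodule.span ℝ s.1 = ⊥ := by simp [hs]
    rw [this, Submodule.mem_bot, sub_eq_zero] at hbx
    exact hbx
  have hv0 : vVec Δ u s.1 = 0 := (hΔ.1.relInt_v hu h0).1
  have hsle : ∀ i : Δ, s ≤ i := fun i => Set.singleton_subset_iff.mpr (hΔ.1.zero_mem i.2)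
  set T : Finset Δ := insert s (Finset.univ.filter fun i => b i ≠ 0) with hT
  have hTm : ∀ i, i ∈ T ↔ i = s ∨ b i ≠ 0 := by intro i; simp [hT]
  obtain ⟨k, hk⟩ : ∃ k, T.card = k + 1 := ⟨T.card - 1, by
    have : 0 < T.card := Finset.card_pos.mpr ⟨s, by simp [hT]⟩
    omega⟩
  obtain ⟨t, ht, htT⟩ := enum_chain T hk (by
    intro i hi j hj
    rcases (hTm i).mp hi with rfl | hi
    · exact Or.inl (hsle j)
    · rcases (hTm j).mp hj with rfl | hj
      · exact Or.inr (hsle i)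
      · exact hb.2 i j hi hj)
  have ht0 : t 0 = s := by
    obtain ⟨j, hj⟩ := (htT s).mp ((hTm s).mpr (Or.inl rfl))
    exact le_antisymm (hj ▸ ht.monotone (Fin.zero_le j)) (hsle _)
  have hsum := sum_enum (fun i : Δ => vVec Δ u i.1) b ht.injective
      fun i hi => (htT i).mp ((hTm i).mpr (Or.inr hi))
  rw [← hbx, Fin.sum_univ_succ, ht0, hv0, smul_zero, zero_add] at hsum
  simp only [eDualCell, Set.mem_iUnion]
  refine ⟨k, fun i => (t i).1, ⟨flag_of_strictMono hΔ.1 ht,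
      (hΔ.1.face_iff s.2 (t 0).2).mpr (hsle _)⟩, ?_⟩
  have ht0' : (t 0).1 = {0} := by rw [ht0]
  rw [dSet, if_pos ht0']
  split_ifs with hk0
  · subst hk0
    rw [hsum]; simp
  · exact ⟨⟨fun j => b (t j.succ), fun j => hb.1 _, hsum⟩, hx⟩

lemma exists_proj (V : Submodule ℝ (Euc n)) :
    ∃ p : Euc n →L[ℝ] Euc (n - Module.finrank ℝ V), (∀ x, p x = 0 ↔ x ∈ V) ∧
      Function.Surjective p := by
  have h : Module.finrank ℝ (Euc n ⧸ V) = Module.finrank ℝ (Euc (n - Module.finrank ℝ V)) := by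
    have := V.finrank_quotient_add_finrank
    rw [finrank_euclideanSpace_fin] at this ⊢
    omega
  let e := LinearEquiv.ofFinrankEq _ _ h
  refine ⟨LinearMap.toContinuousLinearMap (e.toLinearMap ∘ₗ V.mkQ), fun x => ?_, ?_⟩
  · simp
  · simpa using e.surjective.comp V.mkQ_surjective

end Comb

/-- For a complete fan `Δ` in `ℝ^n`, each dual cell
`e_σ^∨` (`σ ∈ Δ`) is homeomorphic to a closed Euclidean ball of dimension
`n − dim σ`, and the dual cells cover the closed unit ball `B`. -/
theorem dual_cells_decompose_ball {n : ℕ}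
    (Δ : Set (Set (Euc n))) (hΔ : IsCompleteFan Δ)
    (u : Set (Euc n) → Euc n) (hu : IsUnitVecChoice Δ u) :
    (∀ σ ∈ Δ,
      Nonempty ((eDualCell Δ u σ : Set (Euc n)) ≃ₜ
        (Metric.closedBall (0 : Euc (n - coneDim σ)) 1 : Set (Euc (n - coneDim σ))))) ∧
    (⋃ σ ∈ Δ, eDualCell Δ u σ) = Metric.closedBall (0 : Euc n) 1 := by
  have : Fintype Δ := hΔ.1.finite.fintype
  have h0 : ({0} : Set (Euc n)) ∈ Δ := by
    obtain ⟨τ, hτ, -⟩ : (0 : Euc n) ∈ ⋃₀ Δ := by rw [hΔ.2]; trivial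
    exact hΔ.1.zero_cone hτ
  have hz := eDual_zero hΔ hu h0
  refine ⟨fun σ hσ => ?_, ?_⟩
  · by_cases hσ0 : σ = {0}
    · subst hσ0
      rw [hz]
      have hd : n - coneDim ({0} : Set (Euc n)) = n := by
        rw [coneDim, Submodule.span_zero_singleton, finrank_bot, Nat.sub_zero]
      rw [hd]
      exact ⟨Homeomorph.refl _⟩
    · set s : Δ := ⟨σ, hσ⟩ with hs
      have he := eDual_eq hΔ.1 (u := u) s hσ0
      change eDualCell Δ u σ = _ at he
      rw [he]
      obtain ⟨p, hp, hsurj⟩ := exists_proj (Submodule.span ℝ σ)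
      have hv := hΔ.1.relInt_v hu hσ
      refine topo_main (fun i : Δ => vVec Δ u i.1) p s
        ((hp _).mpr (Submodule.subset_span hv.1)) ?_ ?_ ?_
      · intro b b' hb hb' hbs hbs' h
        have hlt : (⟨{0}, h0⟩ : Δ) < s :=
          lt_of_le_of_ne (Set.singleton_subset_iff.mpr (hΔ.1.zero_mem hσ))
            fun h => hσ0 (congrArg Subtype.val h).symm
        refine chain_unique hΔ.1 hu ⟨{0}, h0⟩ hb hb' (fun i hi => hlt.trans_le (hbs i hi))
          (fun i hi => hlt.trans_le (hbs' i hi)) ?_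
        rw [h, sub_self]; exact Submodule.zero_mem _
      · intro b b' hb hb' hbs hbs' h
        refine chain_unique hΔ.1 hu s hb hb' hbs hbs' ?_
        rw [← sub_eq_zero, ← map_sub, hp] at h
        exact h
      · intro w
        obtain ⟨x, rfl⟩ := hsurj w
        obtain ⟨τ, hτ, hsτ, N, hN⟩ := hΔ.star hσ hv x
        obtain ⟨b, hb, hbs, hbx⟩ := exists_chain_rep hΔ.1 hu s τ hτ hsτ _ hN
        refine ⟨b, hb, fun i hi => (hbs i hi).1, ?_⟩
        have h1 := (hp _).mpr hbx
        rw [map_sub, map_add, map_smul, (hp _).mpr (Submodule.subset_span hv.1), smul_zero,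
          add_zero, sub_eq_zero] at h1
        exact h1.symm
  · refine (Set.iUnion₂_subset fun σ _ => eDual_subset σ).antisymm ?_
    rw [← hz]
    exact Set.subset_biUnion_of_mem (u := fun σ => eDualCell Δ u σ) h0

end
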